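/- Let B(q) be the 6×6 matrix over ℚ(q) with diagonal entries [2]_q, entries −1 in the symmetric positions corresponding to the edges {1,3}, {3,4}, {4,5}, {5,6}, {2,4} of the E_6 Dynkin diagram (Bourbaki labelling), and 0 otherwise (the symmetrized q-Cartan matrix of type E_6). Then B(q) is invertible and every entry of the matrix [12]_q · B(q)^{−1} lies in ℕ[q,q^{−1}]. -/

import Mathlib

/-!
Write `B = [2] - A` with `A` the adjacency matrix of the `E_6` Dynkin diagram, and define integer
matrices by `C_0 = 0`, `C_1 = 1`, `C_{k+1} = A C_k - C_{k-1}` (Chebyshev polynomials in `A`).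
Since `12` is the Coxeter number, `C_12 = 0`, and `C_k` has nonnegative entries for `k ≤ 12`.
The recursion `[2][k] = [k+1] + [k-1]` makes the product of `B` with `∑_{k=1}^{11} [k] C_{12-k}`
telescope to `[12] C_1 = [12]`. As `[12] ≠ 0`, this sum is `[12] B⁻¹`, and its entries are visibly
`ℕ`-combinations of the quantum numbers `[k]`, hence lie in `ℕ[q,q⁻¹]`.

The sum is written out below as `adjE6`; `cartan_mul_adjE6` checks the product entrywise, using only
the recursion for quantum numbers.
-/

set_option synthInstance.maxHeartbeats 1000000

/-- The variable `q`, as an element of the field `ℚ(q)` of rational functions. -/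
noncomputable def qq : RatFunc ℚ := RatFunc.X

/-- The quantum number `[m]_q = (q^m − q^{−m})/(q − q^{−1}) = Σ_{i=0}^{m−1} q^{m−1−2i}`. -/
noncomputable def qNum (m : ℕ) : RatFunc ℚ :=
  ∑ i ∈ Finset.range m, qq ^ ((m : ℤ) - 1 - 2 * (i : ℤ))

/-- An element of `ℚ(q)` lies in `ℕ[q,q^{−1}]` if it is a Laurent polynomial in `q`
with nonnegative integer coefficients. -/
def IsNatLaurent (f : RatFunc ℚ) : Prop :=
  ∃ c : ℤ →₀ ℕ, f = c.sum fun k n => (n : RatFunc ℚ) * qq ^ k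

theorem qq_ne_zero : qq ≠ 0 := RatFunc.X_ne_zero

theorem qNum_zero : qNum 0 = 0 := by simp [qNum]

theorem qNum_two : qNum 2 = qq + qq⁻¹ := by simp [qNum, Finset.sum_range_succ]

/-- Splitting off the bottom power of `q`. -/
theorem qNum_succ_bot (m : ℕ) : qNum (m + 1) = qq * qNum m + qq ^ (-(m : ℤ)) := by
  rw [qNum, qNum, Finset.sum_range_succ, Finset.mul_sum]
  congr 1
  · refine Finset.sum_congr rfl fun i _ => ?_
    rw [← zpow_one_add₀ qq_ne_zero]
    congr 1
    push_cast
    ring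
  · congr 1
    push_cast
    ring

theorem qNum_two_mul (m : ℕ) : qNum 2 * qNum (m + 1) = qNum (m + 2) + qNum m := by
  have h1 := qNum_succ_bot (m + 1)
  have h3 := qNum_succ_bot m
  have hq : qq⁻¹ * qq = 1 := inv_mul_cancel₀ qq_ne_zero
  have h4 : qq ^ (-((m + 1 : ℕ) : ℤ)) = qq⁻¹ * qq ^ (-(m : ℤ)) := by
    rw [← zpow_neg_one, ← zpow_add₀ qq_ne_zero]
    congr 1
    push_cast
    ring
  rw [h4] at h1
  rw [qNum_two]
  linear_combination -h1 + qq⁻¹ * h3 + qNum m * hq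

theorem qNum_twelve_ne_zero : qNum 12 ≠ 0 := by
  intro h
  have hp : (∑ i ∈ Finset.range 12, (Polynomial.X : Polynomial ℚ) ^ (2 * i)) ≠ 0 := fun h0 => by
    have := congrArg (Polynomial.eval 1) h0
    simp [Polynomial.eval_finsetSum] at this
  -- Clearing the denominator `q^11` and replacing `i` by `11 - i` turns `[12]` into this polynomial.
  have key : algebraMap (Polynomial ℚ) (RatFunc ℚ)
      (∑ i ∈ Finset.range 12, (Polynomial.X : Polynomial ℚ) ^ (2 * i)) = qq ^ 11 * qNum 12 := by
    rw [map_sum, qNum, ← Finset.sum_range_reflect, Finset.mul_sum]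
    refine Finset.sum_congr rfl fun i hi => ?_
    have hi' : i < 12 := Finset.mem_range.mp hi
    rw [map_pow, RatFunc.algebraMap_X, ← zpow_natCast, ← zpow_natCast, ← zpow_add₀ qq_ne_zero]
    change qq ^ _ = qq ^ _
    congr 1
    push_cast
    omega
  rw [h, mul_zero] at key
  exact hp ((map_eq_zero_iff _ (RatFunc.algebraMap_injective ℚ)).mp key)

theorem isNatLaurent_zero : IsNatLaurent 0 := ⟨0, by simp⟩

theorem IsNatLaurent.add {f g : RatFunc ℚ} (hf : IsNatLaurent f) (hg : IsNatLaurent g) :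
    IsNatLaurent (f + g) := by
  obtain ⟨c, rfl⟩ := hf
  obtain ⟨d, rfl⟩ := hg
  refine ⟨c + d, ?_⟩
  rw [Finsupp.sum_add_index']
  · simp
  · intro k m n
    push_cast
    ring

theorem IsNatLaurent.nsmul {f : RatFunc ℚ} (hf : IsNatLaurent f) (n : ℕ) :
    IsNatLaurent (n • f) := by
  induction n with
  | zero => simpa using isNatLaurent_zero
  | succ n ih => simpa only [succ_nsmul] using ih.add hf

theorem isNatLaurent_qNum (m : ℕ) : IsNatLaurent (qNum m) :=
  Finset.sum_induction _ IsNatLaurent (fun _ _ => IsNatLaurent.add) isNatLaurent_zero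
    fun i _ => ⟨Finsupp.single ((m : ℤ) - 1 - 2 * i) 1, by simp⟩

/-- The matrix `∑_{k=1}^{11} [k] C_{12-k}`, where `C_0 = 0`, `C_1 = 1`, `C_{k+1} = A C_k - C_{k-1}`
and `A` is the adjacency matrix of the `E_6` diagram. It equals `[12] B⁻¹`. -/
noncomputable def adjE6 : Matrix (Fin 6) (Fin 6) (RatFunc ℚ) :=
    !![qNum 5 + qNum 11,
       qNum 4 + qNum 8,
       qNum 4 + qNum 6 + qNum 10,
       qNum 3 + qNum 5 + qNum 7 + qNum 9,
       qNum 2 + qNum 6 + qNum 8,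
       qNum 1 + qNum 7;
       qNum 4 + qNum 8,
       qNum 1 + qNum 5 + qNum 7 + qNum 11,
       qNum 3 + qNum 5 + qNum 7 + qNum 9,
       qNum 2 + qNum 4 + 2 • qNum 6 + qNum 8 + qNum 10,
       qNum 3 + qNum 5 + qNum 7 + qNum 9,
       qNum 4 + qNum 8;
       qNum 4 + qNum 6 + qNum 10,
       qNum 3 + qNum 5 + qNum 7 + qNum 9,
       qNum 3 + 2 • qNum 5 + qNum 7 + qNum 9 + qNum 11,
       qNum 2 + 2 • qNum 4 + 2 • qNum 6 + 2 • qNum 8 + qNum 10,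
       qNum 1 + qNum 3 + qNum 5 + 2 • qNum 7 + qNum 9,
       qNum 2 + qNum 6 + qNum 8;
       qNum 3 + qNum 5 + qNum 7 + qNum 9,
       qNum 2 + qNum 4 + 2 • qNum 6 + qNum 8 + qNum 10,
       qNum 2 + 2 • qNum 4 + 2 • qNum 6 + 2 • qNum 8 + qNum 10,
       qNum 1 + 2 • qNum 3 + 3 • qNum 5 + 3 • qNum 7 + 2 • qNum 9 + qNum 11,
       qNum 2 + 2 • qNum 4 + 2 • qNum 6 + 2 • qNum 8 + qNum 10,
       qNum 3 + qNum 5 + qNum 7 + qNum 9;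
       qNum 2 + qNum 6 + qNum 8,
       qNum 3 + qNum 5 + qNum 7 + qNum 9,
       qNum 1 + qNum 3 + qNum 5 + 2 • qNum 7 + qNum 9,
       qNum 2 + 2 • qNum 4 + 2 • qNum 6 + 2 • qNum 8 + qNum 10,
       qNum 3 + 2 • qNum 5 + qNum 7 + qNum 9 + qNum 11,
       qNum 4 + qNum 6 + qNum 10;
       qNum 1 + qNum 7,
       qNum 4 + qNum 8,
       qNum 2 + qNum 6 + qNum 8,
       qNum 3 + qNum 5 + qNum 7 + qNum 9,
       qNum 4 + qNum 6 + qNum 10,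
       qNum 5 + qNum 11]

theorem isNatLaurent_adjE6 (i j : Fin 6) : IsNatLaurent (adjE6 i j) := by
  fin_cases i <;> fin_cases j <;>
    simp only [adjE6] <;>
    repeat' first
      | exact isNatLaurent_qNum _
      | exact (isNatLaurent_qNum _).nsmul _
      | refine IsNatLaurent.add ?_ ?_

theorem cartan_mul_adjE6 :
    !![qNum 2, 0, -1, 0, 0, 0;
       0, qNum 2, 0, -1, 0, 0;
       -1, 0, qNum 2, -1, 0, 0;
       0, -1, -1, qNum 2, -1, 0;
       0, 0, 0, -1, qNum 2, -1;
       0, 0, 0, 0, -1, qNum 2] * adjE6 = qNum 12 • 1 := by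
  have h1 := qNum_two_mul 0
  rw [qNum_zero] at h1
  have h2 := qNum_two_mul 1
  have h3 := qNum_two_mul 2
  have h4 := qNum_two_mul 3
  have h5 := qNum_two_mul 4
  have h6 := qNum_two_mul 5
  have h7 := qNum_two_mul 6
  have h8 := qNum_two_mul 7
  have h9 := qNum_two_mul 8
  have h10 := qNum_two_mul 9
  have h11 := qNum_two_mul 10
  norm_num only at h1 h2 h3 h4 h5 h6 h7 h8 h9 h10 h11
  -- With every product `[2][k]` expanded, each entry is a linear identity in `[1], …, [12]`.
  ext i j
  fin_cases i <;> fin_cases j <;>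
    simp [adjE6, Matrix.mul_apply, Fin.sum_univ_six, mul_add, mul_left_comm (qNum 2) 2,
      mul_left_comm (qNum 2) 3, h1, h2, h3, h4, h5, h6, h7, h8, h9, h10, h11] <;>
    ring

/-- The symmetrized `q`-Cartan matrix of type `E_6` (Bourbaki labelling, edges
`{1,3}, {3,4}, {4,5}, {5,6}, {2,4}`) is invertible, and every entry of
`[12]_q · B(q)⁻¹` lies in `ℕ[q,q⁻¹]`. -/
theorem typeE6_qCartan_inverse
    (B : Matrix (Fin 6) (Fin 6) (RatFunc ℚ))
    (hB : B = !![qNum 2, 0, -1, 0, 0, 0;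
                 0, qNum 2, 0, -1, 0, 0;
                 -1, 0, qNum 2, -1, 0, 0;
                 0, -1, -1, qNum 2, -1, 0;
                 0, 0, 0, -1, qNum 2, -1;
                 0, 0, 0, 0, -1, qNum 2]) :
    IsUnit B ∧ ∀ i j : Fin 6, IsNatLaurent (qNum 12 * B⁻¹ i j) := by
  have hne := qNum_twelve_ne_zero
  have hmul : B * (qNum 12)⁻¹ • adjE6 = 1 := by
    rw [Matrix.mul_smul, hB, cartan_mul_adjE6, smul_smul, inv_mul_cancel₀ hne, one_smul]
  refine ⟨IsUnit.of_mul_eq_one _ hmul, fun i j => ?_⟩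
  rw [Matrix.inv_eq_right_inv hmul, Matrix.smul_apply, smul_eq_mul, mul_inv_cancel_left₀ hne]
  exact isNatLaurent_adjE6 i j
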